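/- arXiv:math/0101123 — 2 statements merged into one kernel-verified Lean document; each statement's English description precedes it below -/
import Mathlib

section
/- For every simple A-module S, the composition multiplicity [M/𝔪M : S] is independent of the choice of maximal ideal 𝔪 of B; that is, for any two maximal ideals 𝔪 and 𝔪′ of B one has [M/𝔪M : S] = [M/𝔪′M : S]. -/
/-!
Let `J` be the Jacobson radical of `A`. The component of `1` in the `S`-isotypic part of the
semisimple module `A ⧸ J` lifts along the nilpotent `J` to an idempotent `e` of `A` acting as the
identity on `S` and as zero on every other simple module (`exists_blockIdempotent`). Since
`N ↦ e N` is exact, walking up a composition series of a finite-dimensional module `N` gives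
`dim (e N) = [N : S] * dim S` (`finrank_img_top`).

On the other hand `e M` is a direct summand of `M` as a `B`-module, hence finite and flat, and
`e (M / I M)` is its fibre at `I`. As `B` is a domain with residue fields `L`, the dimension of this
fibre is the rank of `e M` for every maximal ideal `I` (`finrank_img_fibre`). Dividing by `dim S`,
which is finite and nonzero, yields the theorem.
-/

noncomputable section

/-- `c` is a composition series (of length `m`) of the `R`-module `N`: an increasing chain
of submodules from `⊥` to `⊤` each of whose successive subquotients is simple. -/
def IsCompositionSeries (R N : Type) [Ring R] [AddCommGroup N] [Module R N]
    (m : ℕ) (c : Fin (m + 1) → Submodule R N) : Prop :=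
  c 0 = ⊥ ∧ c (Fin.last m) = ⊤ ∧
    ∀ i : Fin m, c i.castSucc ≤ c i.succ ∧
      IsSimpleModule R
        (↥(c i.succ) ⧸ Submodule.comap (c i.succ).subtype (c i.castSucc))

/-- The number of factors of the series `c` isomorphic to the module `S`; if `c` is a
composition series of `N`, this is the composition multiplicity `[N : S]`
(well-defined by the Jordan–Hölder theorem). -/
def factorMultiplicity (R N : Type) [Ring R] [AddCommGroup N] [Module R N]
    (m : ℕ) (c : Fin (m + 1) → Submodule R N)
    (S : Type) [AddCommGroup S] [Module R S] : ℕ :=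
  Nat.card {i : Fin m //
    Nonempty ((↥(c i.succ) ⧸ Submodule.comap (c i.succ).subtype (c i.castSucc)) ≃ₗ[R] S)}

/-- For an ideal `𝔪` of `B` and a module `M` with commuting `A`- and `B`-actions, the
`A`-submodule of `M` generated by `𝔪M`; as `𝔪M` is already `A`-stable, the quotient
`M ⧸ 𝔪M` is an `A`-module. -/
def idealSMulSubmodule (A B M : Type) [Ring A] [CommRing B]
    [AddCommGroup M] [Module A M] [Module B M]
    (I : Ideal B) : Submodule A M :=
  Submodule.span A ((I • (⊤ : Submodule B M) : Submodule B M) : Set M)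

theorem eq_zero_of_not_iso {A : Type} [Ring A] {T m : Type} [AddCommGroup T] [Module A T]
    [AddCommGroup m] [Module A m] [IsSimpleModule A T] [IsSimpleModule A m] (f : m →ₗ[A] T)
    (h : ¬ Nonempty (m ≃ₗ[A] T)) : f = 0 :=
  f.bijective_or_eq_zero.resolve_left fun hb => h ⟨LinearEquiv.ofBijective f hb⟩

/-- An Artinian ring contains an idempotent that acts as the identity on a given simple module `S`
and annihilates every simple module not isomorphic to `S`: lift the central idempotent of the
semisimple ring `A ⧸ J` cutting out the `S`-isotypic component along the nilpotent radical `J`. -/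
theorem exists_blockIdempotent (A : Type) [Ring A] [IsArtinianRing A]
    (S : Type) [AddCommGroup S] [Module A S] [IsSimpleModule A S] :
    ∃ e : A, e * e = e ∧ (∀ x : S, e • x = x) ∧
      ∀ (T : Type) [AddCommGroup T] [Module A T] [IsSimpleModule A T],
        ¬ Nonempty (T ≃ₗ[A] S) → ∀ x : T, e • x = 0 := by
  classical
  let J := Ring.jacobson A
  have hJ : ∀ (T : Type) [AddCommGroup T] [Module A T] [IsSimpleModule A T] (j : A), j ∈ J →
      ∀ x : T, j • x = 0 := by
    intro T _ _ _ j hj x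
    have := Module.le_comap_jacobson (LinearMap.toSpanSingleton A T x) hj
    rw [IsSemisimpleModule.jacobson_eq_bot] at this
    simpa using this
  have hss : IsSemisimpleModule A (A ⧸ J) :=
    (IsArtinian.isSemisimpleModule_iff_jacobson A (A ⧸ J)).2 (Module.jacobson_quotient_jacobson A A)
  let U : Submodule A (A ⧸ J) := sSup {m | IsSimpleModule A m ∧ Nonempty (m ≃ₗ[A] S)}
  let V : Submodule A (A ⧸ J) := sSup {m | IsSimpleModule A m ∧ ¬ Nonempty (m ≃ₗ[A] S)}
  have hUV : U ⊔ V = ⊤ := by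
    rw [eq_top_iff, ← IsSemisimpleModule.sSup_simples_eq_top A (A ⧸ J)]
    refine sSup_le fun m hm => ?_
    by_cases h : Nonempty (m ≃ₗ[A] S)
    · exact le_sup_of_le_left (le_sSup ⟨hm, h⟩)
    · exact le_sup_of_le_right (le_sSup ⟨hm, h⟩)
  have hone : (Submodule.Quotient.mk (1 : A) : A ⧸ J) ∈ U ⊔ V := hUV ▸ Submodule.mem_top
  -- A lift `a` of the `S`-isotypic component of `1 ∈ A ⧸ J` acts as required on simple modules,
  -- but is idempotent only modulo `J`.
  obtain ⟨u, hu, v, hv, huv⟩ := Submodule.mem_sup.1 hone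
  obtain ⟨a, rfl⟩ := Submodule.Quotient.mk_surjective _ u
  have orbit : ∀ (T : Type) [AddCommGroup T] [Module A T] [IsSimpleModule A T] (x : T),
      ∃ φ : (A ⧸ J) →ₗ[A] T, ∀ b : A, φ (Submodule.Quotient.mk b) = b • x := by
    intro T _ _ _ x
    exact ⟨J.liftQ (LinearMap.toSpanSingleton A T x) fun j hj => by simpa using hJ T j hj x,
      fun b => rfl⟩
  have haT : ∀ (T : Type) [AddCommGroup T] [Module A T] [IsSimpleModule A T],
        ¬ Nonempty (T ≃ₗ[A] S) → ∀ x : T, a • x = 0 := by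
    intro T _ _ _ hT x
    obtain ⟨φ, hφ⟩ := orbit T x
    have : U ≤ LinearMap.ker φ := sSup_le fun m ⟨hm, ⟨i⟩⟩ y hy => by
      have := eq_zero_of_not_iso (φ ∘ₗ m.subtype) fun ⟨j⟩ => hT ⟨j.symm.trans i⟩
      exact LinearMap.congr_fun this ⟨y, hy⟩
    rw [← hφ]
    exact this hu
  have haS : ∀ x : S, a • x = x := by
    intro x
    obtain ⟨φ, hφ⟩ := orbit S x
    have : V ≤ LinearMap.ker φ := sSup_le fun m ⟨hm, hi⟩ y hy => by
      have := eq_zero_of_not_iso (φ ∘ₗ m.subtype) hi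
      exact LinearMap.congr_fun this ⟨y, hy⟩
    have h1 := congrArg φ huv
    rwa [map_add, hφ, hφ, show φ v = 0 from this hv, add_zero, one_smul] at h1
  have haJ : a * a - a ∈ J := by
    have key : ∀ (T : Type) [AddCommGroup T] [Module A T] [IsSimpleModule A T] (x : T),
        (a * a - a) • x = 0 := by
      intro T _ _ _ x
      rw [sub_smul, mul_smul]
      by_cases h : Nonempty (T ≃ₗ[A] S)
      · obtain ⟨i⟩ := h
        have : a • x = x := i.injective (by rw [map_smul, haS])
        simp [this]
      · simp [haT T h]
    change _ ∈ Ring.jacobson A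
    rw [Ring.jacobson_eq_sInf_isMaximal, Submodule.mem_sInf]
    intro I hI
    have : IsSimpleModule A (A ⧸ I) := isSimpleModule_iff_isCoatom.2 (Ideal.isMaximal_def.1 hI)
    have := key (A ⧸ I) (Submodule.Quotient.mk 1)
    rwa [← Submodule.Quotient.mk_smul, Submodule.Quotient.mk_eq_zero, smul_eq_mul, mul_one] at this
  have hnil : IsNilpotent J := IsSemiprimaryRing.isNilpotent
  obtain ⟨n, hn⟩ := hnil
  obtain ⟨e, he, hea⟩ := exists_isIdempotentElem_eq_of_ker_isNilpotent (Ideal.Quotient.mk J)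
    (fun x hx => ⟨n, by
      have := Ideal.pow_mem_pow (Ideal.Quotient.eq_zero_iff_mem.1 hx) n
      rwa [hn] at this⟩) (Ideal.Quotient.mk J a) ⟨a, rfl⟩
    (by rw [IsIdempotentElem, ← map_mul, Ideal.Quotient.eq]; exact haJ)
  have hea' : e - a ∈ J := Ideal.Quotient.eq.1 hea
  have hact : ∀ (T : Type) [AddCommGroup T] [Module A T] [IsSimpleModule A T] (x : T),
      e • x = a • x := fun T _ _ _ x => by
    rw [← sub_eq_zero, ← sub_smul]; exact hJ T _ hea' x
  exact ⟨e, he, fun x => (hact S x).trans (haS x),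
    fun T _ _ _ hT x => (hact T x).trans (haT T hT x)⟩

/-- The subspace `e K` of `N`, for an element `e` of `A` and an `A`-submodule `K` of `N`. It is only
an `L`-subspace, since `e` need not be central. -/
def img {L A N : Type} [Field L] [Ring A] [Algebra L A] [AddCommGroup N]
    [Module A N] [Module L N] [IsScalarTower L A N] (e : A) (K : Submodule A N) : Submodule L N :=
  (K.restrictScalars L).map (Algebra.lsmul L L N e)

theorem mem_img {L A N : Type} [Field L] [Ring A] [Algebra L A] [AddCommGroup N]
    [Module A N] [Module L N] [IsScalarTower L A N] {e : A} (he : e * e = e) {K : Submodule A N}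
    {x : N} : x ∈ img (L := L) e K ↔ x ∈ K ∧ e • x = x := by
  constructor
  · rintro ⟨y, hy, rfl⟩
    refine ⟨K.smul_mem e hy, ?_⟩
    simp [← mul_smul, he]
  · rintro ⟨h, h'⟩
    exact ⟨x, h, h'⟩

/-- If the idempotent `e` acts as the identity on `S` and the layer between `K` and the larger
submodule is isomorphic to `S`, then the layer between their images under `e` is again `S`, so the
dimension grows by `dim S`. -/
theorem finrank_img_of_equiv {L A N : Type} [Field L] [Ring A] [Algebra L A] [AddCommGroup N]
    [Module A N] [Module L N] [IsScalarTower L A N] [FiniteDimensional L N]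
    {e : A} (he : e * e = e) {S : Type} [AddCommGroup S] [Module A S] [Module L S]
    [IsScalarTower L A S] (hS : ∀ x : S, e • x = x) {K K' : Submodule A N} (hK : K ≤ K')
    (i : (K' ⧸ Submodule.comap K'.subtype K) ≃ₗ[A] S) :
    Module.finrank L (img (L := L) e K') =
      Module.finrank L (img (L := L) e K) + Module.finrank L S := by
  let g : K' →ₗ[A] S := i.toLinearMap ∘ₗ (Submodule.comap K'.subtype K).mkQ
  have hg : ∀ x : K', g x = 0 ↔ (x : N) ∈ K := fun x => by simp [g]
  have hgs : Function.Surjective g := i.surjective.comp (Submodule.mkQ_surjective _)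
  have hle : img (L := L) e K' ≤ K'.restrictScalars L := fun x hx => ((mem_img he).1 hx).1
  let h : img (L := L) e K' →ₗ[L] S := (g.restrictScalars L) ∘ₗ (Submodule.inclusion hle)
  have hsurj : LinearMap.range h = ⊤ := by
    rw [LinearMap.range_eq_top]
    intro s
    obtain ⟨y, rfl⟩ := hgs s
    refine ⟨⟨e • y, (mem_img he).2 ⟨K'.smul_mem e y.2, by rw [← mul_smul, he]⟩⟩, ?_⟩
    exact (g.map_smul e y).trans (hS _)
  have hle' : img (L := L) e K ≤ img e K' := Submodule.map_mono hK
  have hker : LinearMap.ker h = (img (L := L) e K).comap (img (L := L) e K').subtype := by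
    ext x
    have hx := (mem_img he).1 x.2
    rw [Submodule.mem_comap, Submodule.subtype_apply, mem_img he, LinearMap.mem_ker]
    exact (hg ⟨x, hx.1⟩).trans ⟨fun h => ⟨h, hx.2⟩, fun h => h.1⟩
  have := LinearMap.finrank_range_add_finrank_ker h
  rw [hsurj, finrank_top, hker, (Submodule.comapSubtypeEquivOfLe hle').finrank_eq] at this
  omega

/-- If the idempotent `e` annihilates the layer between `K` and a larger submodule, both have the
same image under `e`, because `e x = e (e x)` with `e x ∈ K`. -/
theorem img_eq_of_annihilates {L A N : Type} [Field L] [Ring A] [Algebra L A] [AddCommGroup N]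
    [Module A N] [Module L N] [IsScalarTower L A N]
    {e : A} (he : e * e = e) {K K' : Submodule A N} (hK : K ≤ K')
    (h0 : ∀ x : (K' ⧸ Submodule.comap K'.subtype K), e • x = 0) :
    img (L := L) e K' = img (L := L) e K := by
  refine le_antisymm (fun x hx => ?_) (Submodule.map_mono hK)
  rw [mem_img he] at hx ⊢
  have := h0 (Submodule.Quotient.mk ⟨x, hx.1⟩)
  rw [← Submodule.Quotient.mk_smul, Submodule.Quotient.mk_eq_zero] at this
  refine ⟨?_, hx.2⟩
  have h2 : e • x ∈ K := this
  rwa [hx.2] at h2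

/-- An idempotent that is the identity on `S` and zero on all other simple modules detects
multiplicities: `dim (e N) = [N : S] * dim S`. -/
theorem finrank_img_top {L A N : Type} [Field L] [Ring A] [Algebra L A] [AddCommGroup N]
    [Module A N] [Module L N] [IsScalarTower L A N] [FiniteDimensional L N]
    {e : A} (he : e * e = e) {S : Type} [AddCommGroup S] [Module A S] [Module L S]
    [IsScalarTower L A S] (hS : ∀ x : S, e • x = x)
    (hT : ∀ (T : Type) [AddCommGroup T] [Module A T] [IsSimpleModule A T],
        ¬ Nonempty (T ≃ₗ[A] S) → ∀ x : T, e • x = 0)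
    (m : ℕ) (c : Fin (m + 1) → Submodule A N) (hc : IsCompositionSeries A N m c) :
    Module.finrank L (img (L := L) e (⊤ : Submodule A N)) =
      factorMultiplicity A N m c S * Module.finrank L S := by
  classical
  obtain ⟨h0, h1, h⟩ := hc
  let p : Fin m → Prop := fun i =>
    Nonempty ((↥(c i.succ) ⧸ Submodule.comap (c i.succ).subtype (c i.castSucc)) ≃ₗ[A] S)
  have hstep : ∀ i : Fin m, Module.finrank L (img (L := L) e (c i.succ)) =
      Module.finrank L (img (L := L) e (c i.castSucc)) + if p i then Module.finrank L S else 0 := by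
    intro i
    split_ifs with hp
    · exact finrank_img_of_equiv he hS (h i).1 hp.some
    · have := (h i).2
      rw [img_eq_of_annihilates he (h i).1 (hT _ hp), add_zero]
  have hind : ∀ k : Fin (m + 1), Module.finrank L (img (L := L) e (c k)) =
      ∑ i : Fin m with i.castSucc < k, if p i then Module.finrank L S else 0 := by
    intro k
    induction k using Fin.induction with
    | zero =>
      have hb : img (L := L) e (c 0) = ⊥ := by rw [h0, img]; simp
      rw [hb]
      simp
    | succ i ih =>
      rw [hstep, ih, add_comm,
        ← Finset.sum_insert (f := fun j => if p j then Module.finrank L S else 0) (by simp)]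
      congr 1
      ext j
      simp [Fin.castSucc_lt_succ_iff, le_iff_eq_or_lt]
  have := hind (Fin.last m)
  rw [h1] at this
  rw [this, factorMultiplicity, Nat.card_eq_fintype_card, Fintype.card_subtype]
  simp [Fin.castSucc_lt_last, ← Finset.sum_filter, p]

/-- The fibre of a finite flat module over a finitely generated domain at a maximal ideal has
dimension the generic rank; it is a dimension over `L`, because the residue field is `L`. -/
theorem finrank_quotient_smul_top (L B P : Type) [Field L] [IsAlgClosed L] [CommRing B] [IsDomain B]
    [Algebra L B] [Algebra.FiniteType L B] [AddCommGroup P] [Module B P] [Module L P]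
    [IsScalarTower L B P] [Module.Finite B P] [Module.Flat B P] (I : Ideal B) [I.IsMaximal] :
    FiniteDimensional L (P ⧸ (I • ⊤ : Submodule B P)) ∧
    Module.finrank L (P ⧸ (I • ⊤ : Submodule B P)) = Module.finrank B P := by
  have hbq := I.bijective_algebraMap_quotient_residueField
  let eq : (B ⧸ I) ≃ₐ[B] I.ResidueField :=
    AlgEquiv.ofBijective (IsScalarTower.toAlgHom B (B ⧸ I) I.ResidueField) hbq
  have : Algebra.FiniteType L I.ResidueField :=
    Algebra.FiniteType.of_surjective (IsScalarTower.toAlgHom L B I.ResidueField)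
      (fun x => by
        obtain ⟨y, rfl⟩ := hbq.2 x
        obtain ⟨z, rfl⟩ := Ideal.Quotient.mk_surjective y
        exact ⟨z, rfl⟩)
  have : Module.Finite L I.ResidueField := finite_of_finite_type_of_isJacobsonRing L I.ResidueField
  have h1 : Module.finrank L I.ResidueField = 1 := by
    have := IsAlgClosed.algebraMap_bijective_of_isIntegral (k := L) (K := I.ResidueField)
    rw [← (LinearEquiv.ofBijective (Algebra.linearMap L I.ResidueField) this).finrank_eq]
    simp
  let E : I.Fiber P ≃ₗ[B] P ⧸ (I • ⊤ : Submodule B P) :=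
    (TensorProduct.congr eq.symm.toLinearEquiv (LinearEquiv.refl B P)).trans
      (TensorProduct.quotTensorEquivQuotSMul P I)
  have : Module.Finite L (I.Fiber P) := Module.Finite.trans I.ResidueField _
  refine ⟨Module.Finite.equiv (E.restrictScalars L), ?_⟩
  rw [← (E.restrictScalars L).finrank_eq, ← Ideal.finrank_fiber_eq_finrank (M := P) I,
    ← Module.finrank_mul_finrank L I.ResidueField (I.Fiber P), h1, one_mul]

/-- The `B`-submodule `I M` is already stable under `A`. -/
theorem mem_idealSMulSubmodule {A B M : Type} [Ring A] [CommRing B]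
    [AddCommGroup M] [Module A M] [Module B M] [SMulCommClass A B M]
    (I : Ideal B) {x : M} :
    x ∈ idealSMulSubmodule A B M I ↔ x ∈ (I • (⊤ : Submodule B M) : Submodule B M) := by
  refine ⟨fun h => ?_, fun h => Submodule.subset_span h⟩
  induction h using Submodule.span_induction with
  | mem x h => exact h
  | zero => exact zero_mem _
  | add x y _ _ hx hy => exact add_mem hx hy
  | smul a x _ hx =>
    have := Submodule.mem_map_of_mem (f := DistribSMul.toLinearMap B M a) hx
    rw [Submodule.map_smul''] at this
    exact Submodule.smul_mono le_rfl le_top this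

/-- The fibre at `I` of the direct summand `e M` of `M` is `e (M / I M)`, so the dimension of the
latter is the rank of `e M`, whatever `I` is. Finite-dimensionality of `M / I M` is included because
`finrank_img_top` requires it. -/
theorem finrank_img_fibre (L A B M : Type) [Field L] [IsAlgClosed L] [Ring A] [Algebra L A]
    [CommRing B] [IsDomain B]
    [Algebra L B] [Algebra.FiniteType L B] [AddCommGroup M] [Module A M] [Module B M] [Module L M]
    [IsScalarTower L A M] [IsScalarTower L B M] [SMulCommClass A B M]
    [Module.Finite B M] [Module.Flat B M] {e : A} (he : e * e = e) (I : Ideal B) [I.IsMaximal] :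
    FiniteDimensional L (M ⧸ idealSMulSubmodule A B M I) ∧
    Module.finrank L (img (L := L) e (⊤ : Submodule A (M ⧸ idealSMulSubmodule A B M I))) =
      Module.finrank B (LinearMap.range (DistribSMul.toLinearMap B M e)) := by
  constructor
  · have := (finrank_quotient_smul_top L B M I).1
    have : FiniteDimensional L (M ⧸ (I • ⊤ : Submodule B M).restrictScalars L) :=
      Module.Finite.equiv (Submodule.Quotient.restrictScalarsEquiv L _).symm
    let f : M →ₗ[L] (M ⧸ idealSMulSubmodule A B M I) :=
      (idealSMulSubmodule A B M I).mkQ.restrictScalars L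
    refine Module.Finite.of_surjective (M := M ⧸ (I • ⊤ : Submodule B M).restrictScalars L)
      (((I • ⊤ : Submodule B M).restrictScalars L).liftQ f fun x hx => ?_) ?_
    · exact (Submodule.Quotient.mk_eq_zero _).2 ((mem_idealSMulSubmodule I).2 hx)
    · intro y
      obtain ⟨x, rfl⟩ := Submodule.Quotient.mk_surjective _ y
      exact ⟨Submodule.Quotient.mk x, rfl⟩
  · let ε := DistribSMul.toLinearMap B M e
    have hε : ∀ x ∈ LinearMap.range ε, e • x = x := by
      rintro _ ⟨y, rfl⟩
      simp [ε, ← mul_smul, he]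
    have : Module.Flat B (LinearMap.range ε) :=
      Module.Flat.of_retract (LinearMap.range ε).subtype ε.rangeRestrict <| by
        ext x
        exact hε x x.2
    rw [← (finrank_quotient_smul_top L B (LinearMap.range ε) I).2]
    symm
    let N := M ⧸ idealSMulSubmodule A B M I
    let f : LinearMap.range ε →ₗ[L] img (L := L) e (⊤ : Submodule A N) :=
      LinearMap.codRestrict _ (((idealSMulSubmodule A B M I).mkQ.restrictScalars L) ∘ₗ
        ((LinearMap.range ε).subtype.restrictScalars L)) fun x => (mem_img he).2 ⟨trivial, by
          exact congrArg (idealSMulSubmodule A B M I).mkQ (hε x x.2)⟩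
    have hf : Function.Surjective f := by
      rintro ⟨y, hy⟩
      obtain ⟨x, rfl⟩ := Submodule.Quotient.mk_surjective _ y
      exact ⟨⟨e • x, x, rfl⟩, Subtype.ext ((mem_img he).1 hy).2⟩
    -- `e M ∩ I M = I (e M)`: apply `e`, which fixes `e M` pointwise, to an element of `I M`.
    have hk : LinearMap.ker f = (I • ⊤ : Submodule B (LinearMap.range ε)).restrictScalars L := by
      ext x
      rw [LinearMap.mem_ker, Submodule.restrictScalars_mem]
      have : f x = 0 ↔ (x : M) ∈ (I • (⊤ : Submodule B M) : Submodule B M) := by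
        rw [← mem_idealSMulSubmodule (A := A), ← Submodule.Quotient.mk_eq_zero, Subtype.ext_iff]
        rfl
      rw [this]
      constructor
      · intro hx
        have := Submodule.mem_map_of_mem (f := ε.rangeRestrict) hx
        rw [Submodule.map_smul''] at this
        have h2 : ε.rangeRestrict x = x := Subtype.ext (hε x x.2)
        rw [h2] at this
        exact Submodule.smul_mono le_rfl le_top this
      · intro hx
        have := Submodule.mem_map_of_mem (f := (LinearMap.range ε).subtype) hx
        rw [Submodule.map_smul''] at this
        exact Submodule.smul_mono le_rfl le_top this
    exact LinearEquiv.finrank_eq ((Submodule.quotEquivOfEq _ _ hk.symm).trans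
      (f.quotKerEquivOfSurjective hf))

/-!
STATEMENT 18: Let `L` be an algebraically closed field, `A` a finite-dimensional
associative unital `L`-algebra, and `B` a commutative unital `L`-algebra which is an
integral domain and is finitely generated as an `L`-algebra.  Let `M` be a left module
over `A ⊗_L B` (i.e. a module with commuting `A`- and `B`-actions compatible with `L`)
which is finitely generated and flat as a `B`-module.  Then for every simple `A`-module
`S`, the composition multiplicity `[M/𝔪M : S]` is independent of the choice of maximal
ideal `𝔪` of `B`: for any two maximal ideals `𝔪`, `𝔪′` and any composition series of
`M/𝔪M` and of `M/𝔪′M`, the number of composition factors isomorphic to `S` is the same.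
-/

theorem statement_18
    (L : Type) [Field L] [IsAlgClosed L]
    (A : Type) [Ring A] [Algebra L A] [FiniteDimensional L A]
    (B : Type) [CommRing B] [IsDomain B] [Algebra L B] (hB : Algebra.FiniteType L B)
    (M : Type) [AddCommGroup M] [Module A M] [Module B M] [Module L M]
    [IsScalarTower L A M] [IsScalarTower L B M] [SMulCommClass A B M]
    [Module.Finite B M] [Module.Flat B M]
    (S : Type) [AddCommGroup S] [Module A S] (hS : IsSimpleModule A S)
    (I I' : Ideal B) (hI : I.IsMaximal) (hI' : I'.IsMaximal)
    (m : ℕ) (c : Fin (m + 1) → Submodule A (M ⧸ idealSMulSubmodule A B M I))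
    (hc : IsCompositionSeries A (M ⧸ idealSMulSubmodule A B M I) m c)
    (m' : ℕ) (c' : Fin (m' + 1) → Submodule A (M ⧸ idealSMulSubmodule A B M I'))
    (hc' : IsCompositionSeries A (M ⧸ idealSMulSubmodule A B M I') m' c') :
    factorMultiplicity A (M ⧸ idealSMulSubmodule A B M I) m c S =
      factorMultiplicity A (M ⧸ idealSMulSubmodule A B M I') m' c' S := by
  have : IsArtinianRing A := IsArtinianRing.of_finite L A
  obtain ⟨e, he, heS, heT⟩ := exists_blockIdempotent A S
  let _ : Module L S := Module.compHom S (algebraMap L A)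
  have : IsScalarTower L A S := ⟨fun l a x => by
    rw [Algebra.smul_def, mul_smul]; rfl⟩
  have : Module.Finite L S := Module.Finite.trans A S
  have : Nontrivial S := IsSimpleModule.nontrivial A S
  have hpos : 0 < Module.finrank L S := Module.finrank_pos
  obtain ⟨hfin, hrank⟩ := finrank_img_fibre L A B M he I
  obtain ⟨hfin', hrank'⟩ := finrank_img_fibre L A B M he I'
  rw [finrank_img_top he heS heT m c hc] at hrank
  rw [finrank_img_top he heS heT m' c' hc'] at hrank'
  exact Nat.eq_of_mul_eq_mul_right hpos (hrank.trans hrank'.symm)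
end
end

section
/- For all i, j ∈ ℤ/nℤ and all integers m ≥ 0: dim_ℂ Ext^m_A(S_i, S_j) = 1 if (m = 0 and j = i), or (m = 1 and j = i+1 or j = i−1), or (m = 2 and j = i); and Ext^m_A(S_i, S_j) = 0 in all other cases. -/
/-!
The proof computes `Ext` from the Koszul resolution.  For `k ∈ ℤ/nℤ` let `P_k` be `ℂ[X,Y]` with `X`,
`Y` acting by multiplication and `g` acting by `ζ ^ k` times the automorphism `X ↦ ζX`, `Y ↦ ζ⁻¹Y`.
It is the free `A`-module on a generator `v` subject to `g v = ζ ^ k v` (`ofWt`, `hom_ext`), hence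
the direct summand `A e_k` of `A`, where `e_k` is the averaging idempotent; so it is projective
(`projective_P`).

The sequence `0 → P_k → P_{k+1} ⊕ P_{k-1} → P_k → S_k → 0` with maps `r ↦ (Yr, -Xr)`,
`(p, q) ↦ Xp + Yq` and `p ↦ p(0,0)` is exact, because `X` and `Y` are coprime in `ℂ[X,Y]` and
generate the ideal of polynomials without constant term (`d₂_injective`, `exact_d₂_d₁`,
`exact_d₁_eps`).  This is a projective resolution of `S_k`.

Since `X` and `Y` act by zero on `S_j`, all differentials vanish after applying `Hom(-, S_j)`
(`resd_comp_eq_zero`), so `Ext^m(S_k, S_j)` is the space of maps from the `m`-th term to `S_j`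
(`rank_ext`).  Finally `Hom(P_k, S_j)` is the space of vectors of weight `ζ ^ k` in `S_j`: it is
one-dimensional for `j = k` and zero otherwise.  As `n ≥ 3`, the vertices `k + 1` and `k - 1` are
distinct, so the middle term contributes a one-dimensional space for each of them.
-/


/-!
STATEMENT 19: Fix `n ≥ 3` and a primitive `n`-th root of unity `ζ ∈ ℂ`.  Let
`A = ℂ[X,Y] ∗ Γ` be the skew group algebra of `Γ = ℤ/nℤ` acting on `ℂ[X,Y]` by
`g·X = ζX`, `g·Y = ζ⁻¹Y`: the associative unital `ℂ`-algebra with generators `X, Y, g`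
and relations `XY = YX`, `g^n = 1`, `gX = ζXg`, `gY = ζ⁻¹Yg`.  For `i ∈ ℤ/nℤ`, `S_i` is
the one-dimensional left `A`-module on which `X` and `Y` act as `0` and `g` acts as
`ζ^i` (realised as the cyclic module `A ⧸ A·(X, Y, g − ζ^i)`).  Then for all
`i, j ∈ ℤ/nℤ` and `m ≥ 0`, `dim_ℂ Ext^m_A(S_i, S_j) = 1` if (`m = 0` and `j = i`), or
(`m = 1` and `j = i+1` or `j = i−1`), or (`m = 2` and `j = i`), and
`Ext^m_A(S_i, S_j) = 0` otherwise.
-/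

noncomputable section

open CategoryTheory

/-- the generator `X` of the free algebra `ℂ⟨X,Y,g⟩` -/
def sX : FreeAlgebra ℂ (Fin 3) := FreeAlgebra.ι ℂ 0

/-- the generator `Y` of the free algebra `ℂ⟨X,Y,g⟩` -/
def sY : FreeAlgebra ℂ (Fin 3) := FreeAlgebra.ι ℂ 1

/-- the generator `g` of the free algebra `ℂ⟨X,Y,g⟩` -/
def sG : FreeAlgebra ℂ (Fin 3) := FreeAlgebra.ι ℂ 2

/-- The defining relations of the skew group algebra `A = ℂ[X,Y] ∗ (ℤ/nℤ)`. -/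
inductive SkewRel (n : ℕ) (ζ : ℂ) : FreeAlgebra ℂ (Fin 3) → FreeAlgebra ℂ (Fin 3) → Prop
  | comm : SkewRel n ζ (sX * sY) (sY * sX)
  | gn : SkewRel n ζ (sG ^ n) 1
  | gx : SkewRel n ζ (sG * sX) (algebraMap ℂ _ ζ * (sX * sG))
  | gy : SkewRel n ζ (sG * sY) (algebraMap ℂ _ ζ⁻¹ * (sY * sG))

/-- the skew group algebra `A = ℂ[X,Y] ∗ (ℤ/nℤ)` -/
abbrev SkewA (n : ℕ) (ζ : ℂ) := RingQuot (SkewRel n ζ)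

/-- the simple `A`-module `S_i`, realised as the quotient of `A` by the left ideal
generated by `X`, `Y` and `g − ζ^i` -/
abbrev SkewS (n : ℕ) (ζ : ℂ) (i : ZMod n) :=
  SkewA n ζ ⧸ (Ideal.span
    {RingQuot.mkAlgHom ℂ (SkewRel n ζ) sX,
     RingQuot.mkAlgHom ℂ (SkewRel n ζ) sY,
     RingQuot.mkAlgHom ℂ (SkewRel n ζ) sG - algebraMap ℂ (SkewA n ζ) (ζ ^ i.val)} :
    Ideal (SkewA n ζ))

namespace SkewExt

open MvPolynomial

variable {n : ℕ} {ζ : ℂ}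

/-! ### The algebra `A` -/

/-- The image of `X` in `A`. -/
def x (n : ℕ) (ζ : ℂ) : SkewA n ζ := RingQuot.mkAlgHom ℂ (SkewRel n ζ) sX

/-- The image of `Y` in `A`. -/
def y (n : ℕ) (ζ : ℂ) : SkewA n ζ := RingQuot.mkAlgHom ℂ (SkewRel n ζ) sY

/-- The image of `g` in `A`. -/
def g (n : ℕ) (ζ : ℂ) : SkewA n ζ := RingQuot.mkAlgHom ℂ (SkewRel n ζ) sG

/-- The structure map `ℂ → A`. -/
abbrev sc (n : ℕ) (ζ : ℂ) : ℂ →+* SkewA n ζ := algebraMap ℂ (SkewA n ζ)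

lemma sc_comm (c : ℂ) (a : SkewA n ζ) : sc n ζ c * a = a * sc n ζ c := Algebra.commutes c a

lemma x_mul_y : x n ζ * y n ζ = y n ζ * x n ζ := by
  simpa [x, y] using RingQuot.mkAlgHom_rel ℂ (SkewRel.comm (n := n) (ζ := ζ))

lemma g_pow : g n ζ ^ n = 1 := by
  simpa [g] using RingQuot.mkAlgHom_rel ℂ (SkewRel.gn (n := n) (ζ := ζ))

lemma g_mul_x : g n ζ * x n ζ = sc n ζ ζ * (x n ζ * g n ζ) := by
  simpa only [x, g, map_mul, AlgHom.commutes] using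
    RingQuot.mkAlgHom_rel ℂ (SkewRel.gx (n := n) (ζ := ζ))

lemma g_mul_y : g n ζ * y n ζ = sc n ζ ζ⁻¹ * (y n ζ * g n ζ) := by
  simpa only [y, g, map_mul, AlgHom.commutes] using
    RingQuot.mkAlgHom_rel ℂ (SkewRel.gy (n := n) (ζ := ζ))

@[elab_as_elim]
lemma induction {C : SkewA n ζ → Prop} (a : SkewA n ζ)
    (hc : ∀ c, C (sc n ζ c)) (hx : C (x n ζ)) (hy : C (y n ζ)) (hg : C (g n ζ))
    (hadd : ∀ a b, C a → C b → C (a + b)) (hmul : ∀ a b, C a → C b → C (a * b)) : C a := by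
  obtain ⟨a, rfl⟩ := RingQuot.mkAlgHom_surjective ℂ (SkewRel n ζ) a
  induction a using FreeAlgebra.induction with
  | grade0 r => simpa only [AlgHom.commutes] using hc r
  | grade1 k => fin_cases k; exacts [hx, hy, hg]
  | mul a b ha hb => rw [map_mul]; exact hmul _ _ ha hb
  | add a b ha hb => rw [map_add]; exact hadd _ _ ha hb

/-- The universal property of `A`: an algebra map out of `A` is a triple of elements satisfying
the defining relations. -/
def lift {B : Type*} [Ring B] [Algebra ℂ B] (a b c : B) (h₁ : a * b = b * a) (h₂ : c ^ n = 1)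
    (h₃ : c * a = algebraMap ℂ B ζ * (a * c)) (h₄ : c * b = algebraMap ℂ B ζ⁻¹ * (b * c)) :
    SkewA n ζ →ₐ[ℂ] B :=
  RingQuot.liftAlgHom ℂ ⟨FreeAlgebra.lift ℂ ![a, b, c], by
    rintro _ _ (_ | _ | _ | _) <;> simpa [sX, sY, sG]⟩

section lift
variable {B : Type*} [Ring B] [Algebra ℂ B] (a b c : B) (h₁ : a * b = b * a) (h₂ : c ^ n = 1)
    (h₃ : c * a = algebraMap ℂ B ζ * (a * c)) (h₄ : c * b = algebraMap ℂ B ζ⁻¹ * (b * c))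

lemma lift_x : lift (ζ := ζ) a b c h₁ h₂ h₃ h₄ (x n ζ) = a := by simp [lift, x, sX]
lemma lift_y : lift (ζ := ζ) a b c h₁ h₂ h₃ h₄ (y n ζ) = b := by simp [lift, y, sY]
lemma lift_g : lift (ζ := ζ) a b c h₁ h₂ h₃ h₄ (g n ζ) = c := by simp [lift, g, sG]

end lift

/-! ### Weights -/

/-- The weight `ζ ^ k`, for `k ∈ ℤ/nℤ`. -/
def wt (ζ : ℂ) (k : ZMod n) : ℂ := ζ ^ k.val

lemma wt_pow (h : IsPrimitiveRoot ζ n) (k : ZMod n) : wt ζ k ^ n = 1 := by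
  rw [wt, ← pow_mul, mul_comm, pow_mul, h.pow_eq_one, one_pow]

lemma wt_add_one [NeZero n] (h : IsPrimitiveRoot ζ n) (k : ZMod n) :
    wt ζ (k + 1) = wt ζ k * ζ := by
  have : ((k.val + 1 : ℕ) : ZMod n) = k + 1 := by simp
  rw [wt, wt, ← pow_succ, ← this, ZMod.val_natCast]
  have := pow_mod_orderOf ζ (k.val + 1)
  rwa [← h.eq_orderOf] at this

lemma zeta_ne_zero [NeZero n] (h : IsPrimitiveRoot ζ n) : ζ ≠ 0 := h.ne_zero (NeZero.ne n)

lemma wt_sub_one [NeZero n] (h : IsPrimitiveRoot ζ n) (k : ZMod n) :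
    wt ζ (k - 1) = wt ζ k * ζ⁻¹ := by
  rw [eq_mul_inv_iff_mul_eq₀ (zeta_ne_zero h), ← wt_add_one h, sub_add_cancel]

lemma wt_injective [NeZero n] (h : IsPrimitiveRoot ζ n) :
    Function.Injective (wt (n := n) ζ) := fun a b hab =>
  ZMod.val_injective n (h.pow_inj (ZMod.val_lt a) (ZMod.val_lt b) hab)

lemma wt_ne_zero [NeZero n] (h : IsPrimitiveRoot ζ n) (k : ZMod n) : wt ζ k ≠ 0 :=
  pow_ne_zero _ (zeta_ne_zero h)

/-! ### The projective modules `P_k` -/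

/-- The polynomial ring `ℂ[X,Y]`. -/
abbrev Pol := MvPolynomial (Fin 2) ℂ

/-- The automorphism `X ↦ ζX`, `Y ↦ ζ⁻¹Y` of `ℂ[X,Y]` by which the generator of `Γ` acts. -/
def sigma (ζ : ℂ) : Pol →ₐ[ℂ] Pol := aeval ![C ζ * X 0, C ζ⁻¹ * X 1]

@[simp] lemma sigma_X0 : sigma ζ (X 0) = C ζ * X 0 := by simp [sigma]
@[simp] lemma sigma_X1 : sigma ζ (X 1) = C ζ⁻¹ * X 1 := by simp [sigma]
@[simp] lemma sigma_C (c : ℂ) : sigma ζ (C c) = C c := (sigma ζ).commutes c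

lemma sigma_pow (hζ : ζ ^ n = 1) : sigma ζ ^ n = 1 := by
  have key (m : ℕ) : (sigma ζ ^ m) (X 0) = C (ζ ^ m) * X 0 ∧
      (sigma ζ ^ m) (X 1) = C (ζ⁻¹ ^ m) * X 1 := by
    induction m with
    | zero => simp
    | succ m ih =>
      rw [pow_succ', AlgHom.mul_apply, AlgHom.mul_apply, ih.1, ih.2, map_mul, map_mul]
      simp only [sigma_C, sigma_X0, sigma_X1, pow_succ, map_mul, mul_assoc, and_self]
  refine MvPolynomial.algHom_ext fun k => ?_
  fin_cases k
  · simpa [hζ] using (key n).1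
  · simpa [hζ] using (key n).2

/-- The representation of `A` on `ℂ[X,Y]` in which `X`, `Y` act by multiplication and `g` acts by
`ζ ^ k` times the automorphism `sigma`. -/
def rep (h : IsPrimitiveRoot ζ n) (k : ZMod n) : SkewA n ζ →ₐ[ℂ] Module.End ℂ Pol :=
  lift (LinearMap.mulLeft ℂ (X 0)) (LinearMap.mulLeft ℂ (X 1)) (wt ζ k • (sigma ζ).toLinearMap)
    (LinearMap.ext fun p => by simp [mul_left_comm])
    (by
      rw [smul_pow, wt_pow h, one_smul]
      have (m : ℕ) : (sigma ζ).toLinearMap ^ m = (sigma ζ ^ m).toLinearMap := by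
        induction m with
        | zero => rfl
        | succ m ih => rw [pow_succ, ih, pow_succ]; rfl
      rw [this, sigma_pow h.pow_eq_one]; rfl)
    (by
      refine LinearMap.ext fun p => ?_
      simp only [Module.End.mul_apply, LinearMap.smul_apply, LinearMap.mulLeft_apply,
        AlgHom.toLinearMap_apply, map_mul, sigma_X0, smul_eq_C_mul,
        Module.algebraMap_end_apply]
      ring)
    (by
      refine LinearMap.ext fun p => ?_
      simp only [Module.End.mul_apply, LinearMap.smul_apply, LinearMap.mulLeft_apply,
        AlgHom.toLinearMap_apply, map_mul, sigma_X1, smul_eq_C_mul,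
        Module.algebraMap_end_apply]
      ring)

/-- The module `P_k`: the space `ℂ[X,Y]` with `A` acting through `rep h k`.  It is isomorphic to
the indecomposable projective `A e_k`, where `e_k` is the idempotent of `ℂΓ` of weight `ζ ^ k`. -/
def P (_ : IsPrimitiveRoot ζ n) (_ : ZMod n) : Type := Pol

variable (h : IsPrimitiveRoot ζ n) (k : ZMod n)

instance : AddCommGroup (P h k) := inferInstanceAs (AddCommGroup Pol)
instance : Module (SkewA n ζ) (P h k) := Module.compHom Pol (rep h k).toRingHom

/-- A polynomial, regarded as an element of `P_k`. -/
def toP (p : Pol) : P h k := p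

/-- The polynomial underlying an element of `P_k`. -/
def ofP (p : P h k) : Pol := p

lemma ofP_toP (p : Pol) : ofP h k (toP h k p) = p := rfl

lemma toP_ofP (p : P h k) : toP h k (ofP h k p) = p := rfl

lemma exists_toP (p : P h k) : ∃ q, toP h k q = p := ⟨p, rfl⟩

lemma ofP_add (p q : P h k) : ofP h k (p + q) = ofP h k p + ofP h k q := rfl

lemma toP_add (p q : Pol) : toP h k (p + q) = toP h k p + toP h k q := rfl

lemma sc_smul (c : ℂ) (p : Pol) : sc n ζ c • toP h k p = toP h k (C c * p) := by
  change rep h k (algebraMap ℂ _ c) p = _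
  rw [AlgHom.commutes, Module.algebraMap_end_apply, smul_eq_C_mul]; rfl

lemma x_smul (p : Pol) : x n ζ • toP h k p = toP h k (X 0 * p) := by
  change rep h k (x n ζ) p = _
  rw [rep, lift_x]; rfl

lemma y_smul (p : Pol) : y n ζ • toP h k p = toP h k (X 1 * p) := by
  change rep h k (y n ζ) p = _
  rw [rep, lift_y]; rfl

lemma g_smul (p : Pol) : g n ζ • toP h k p = toP h k (C (wt ζ k) * sigma ζ p) := by
  change rep h k (g n ζ) p = _
  rw [rep, lift_g, LinearMap.smul_apply, smul_eq_C_mul]; rfl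

/-- Evaluation of polynomials at the commuting elements `X, Y` of `A`. -/
def phi (n : ℕ) (ζ : ℂ) : Pol →ₐ[ℂ] SkewA n ζ :=
  AddMonoidAlgebra.lift ℂ (SkewA n ζ) (Fin 2 →₀ ℕ)
    { toFun := fun s => x n ζ ^ (s.toAdd 0) * y n ζ ^ (s.toAdd 1)
      map_one' := by simp
      map_mul' := fun s t => by
        have hc : Commute (y n ζ) (x n ζ) := x_mul_y.symm
        simp only [toAdd_mul, Finsupp.add_apply, pow_add]
        rw [mul_assoc, mul_assoc, ← mul_assoc (x n ζ ^ _) (y n ζ ^ _) (y n ζ ^ _),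
          ← mul_assoc (y n ζ ^ _) (x n ζ ^ _) (y n ζ ^ _),
          ((hc.pow_pow _ _).eq : y n ζ ^ (s.toAdd 1) * x n ζ ^ (t.toAdd 0) = _)] }

lemma phi_X0 : phi n ζ (X 0) = x n ζ := by
  rw [phi, X, ← single_eq_monomial, AddMonoidAlgebra.lift_single]; simp

lemma phi_X1 : phi n ζ (X 1) = y n ζ := by
  rw [phi, X, ← single_eq_monomial, AddMonoidAlgebra.lift_single]; simp

lemma phi_C (c : ℂ) : phi n ζ (C c) = sc n ζ c := (phi n ζ).commutes c

lemma g_mul_phi (p : Pol) : g n ζ * phi n ζ p = phi n ζ (sigma ζ p) * g n ζ := by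
  induction p using MvPolynomial.induction_on with
  | C c => rw [sigma_C, phi_C, sc_comm]
  | add p q hp hq => rw [map_add, map_add, map_add, mul_add, add_mul, hp, hq]
  | mul_X p k hp =>
    rw [map_mul, map_mul, map_mul, ← mul_assoc, hp, mul_assoc, mul_assoc]
    congr 1
    fin_cases k
    · simp only [Fin.zero_eta, sigma_X0, map_mul, phi_X0, phi_C, g_mul_x, mul_assoc]
    · simp only [Fin.mk_one, sigma_X1, map_mul, phi_X1, phi_C, g_mul_y, mul_assoc]

lemma phi_smul_one (p : Pol) : phi n ζ p • toP h k 1 = toP h k p := by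
  suffices H : ∀ q, phi n ζ p • toP h k q = toP h k (p * q) by rw [H, mul_one]
  induction p using MvPolynomial.induction_on with
  | C c => intro q; rw [phi_C, sc_smul]
  | add p q hp hq => intro r; rw [map_add, add_smul, hp, hq, add_mul]; rfl
  | mul_X p k hp =>
    intro q
    rw [map_mul, mul_smul]
    fin_cases k
    · simp only [Fin.zero_eta, phi_X0, x_smul, hp, mul_assoc]
    · simp only [Fin.mk_one, phi_X1, y_smul, hp, mul_assoc]

variable {N : Type*} [AddCommGroup N] [Module (SkewA n ζ) N]

/-- `P_k` is free on a generator of weight `ζ ^ k`: the map `P_k → N` attached to `v ∈ N` with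
`g v = ζ ^ k v` is `p ↦ p(X, Y) v`. -/
def ofWt (v : N) (hv : g n ζ • v = sc n ζ (wt ζ k) • v) : P h k →ₗ[SkewA n ζ] N where
  toFun p := phi n ζ (ofP h k p) • v
  map_add' p q := by rw [ofP_add, map_add, add_smul]
  map_smul' a := by
    rw [RingHom.id_apply]
    induction a using induction with
    | hc c =>
      intro p
      obtain ⟨p, rfl⟩ := exists_toP h k p
      rw [sc_smul, smul_smul, ← phi_C, ofP_toP, ofP_toP, ← map_mul]
    | hx =>
      intro p
      obtain ⟨p, rfl⟩ := exists_toP h k p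
      rw [x_smul, smul_smul, ← phi_X0, ofP_toP, ofP_toP, ← map_mul]
    | hy =>
      intro p
      obtain ⟨p, rfl⟩ := exists_toP h k p
      rw [y_smul, smul_smul, ← phi_X1, ofP_toP, ofP_toP, ← map_mul]
    | hg =>
      intro p
      obtain ⟨p, rfl⟩ := exists_toP h k p
      rw [g_smul, smul_smul, ofP_toP, ofP_toP, g_mul_phi, mul_smul, hv, ← mul_smul, ← sc_comm,
        ← phi_C, ← map_mul]
    | hadd a b ha hb => intro p; rw [add_smul, add_smul, ← ha, ← hb, ofP_add, map_add, add_smul]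
    | hmul a b ha hb => intro p; rw [mul_smul, ha, hb, mul_smul]

lemma ofWt_one (v : N) (hv : g n ζ • v = sc n ζ (wt ζ k) • v) :
    ofWt h k v hv (toP h k 1) = v := by
  change phi n ζ (1 : Pol) • v = v
  rw [map_one, one_smul]

lemma ofWt_toP (v : N) (hv : g n ζ • v = sc n ζ (wt ζ k) • v) (p : Pol) :
    ofWt h k v hv (toP h k p) = phi n ζ p • v := rfl

variable {h k}

lemma hom_ext {f f' : P h k →ₗ[SkewA n ζ] N} (hf : f (toP h k 1) = f' (toP h k 1)) : f = f' := by
  refine LinearMap.ext fun p => ?_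
  obtain ⟨p, rfl⟩ := exists_toP h k p
  rw [← phi_smul_one, map_smul, map_smul, hf]

lemma g_smul_hom_one (f : P h k →ₗ[SkewA n ζ] N) :
    g n ζ • f (toP h k 1) = sc n ζ (wt ζ k) • f (toP h k 1) := by
  rw [← map_smul, ← map_smul, g_smul, sc_smul, map_one]

variable (h k)

/-- The idempotent `e_k = (1/n) ∑ ζ^{-kt} g^t` of `ℂΓ ⊆ A`. -/
def idem (n : ℕ) (ζ : ℂ) (k : ZMod n) : SkewA n ζ :=
  sc n ζ (n : ℂ)⁻¹ * ∑ t ∈ Finset.range n, (sc n ζ (wt ζ k)⁻¹ * g n ζ) ^ t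

lemma commute_sc (c : ℂ) (a : SkewA n ζ) : Commute (sc n ζ c) a := sc_comm c a

lemma g_mul_idem [NeZero n] (h : IsPrimitiveRoot ζ n) (k : ZMod n) :
    g n ζ • idem n ζ k = sc n ζ (wt ζ k) • idem n ζ k := by
  have hg : g n ζ = sc n ζ (wt ζ k) * (sc n ζ (wt ζ k)⁻¹ * g n ζ) := by
    rw [← mul_assoc, ← map_mul, mul_inv_cancel₀ (wt_ne_zero h k), map_one, one_mul]
  have hu : (sc n ζ (wt ζ k)⁻¹ * g n ζ) ^ n = 1 := by
    rw [(commute_sc _ _).mul_pow, g_pow, ← map_pow, inv_pow, wt_pow h, inv_one, map_one, one_mul]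
  have hs := mul_geom_sum (sc n ζ (wt ζ k)⁻¹ * g n ζ) n
  rw [hu, sub_self, sub_mul, one_mul, sub_eq_zero] at hs
  rw [smul_eq_mul, smul_eq_mul]
  conv_lhs => rw [hg]
  rw [idem, mul_assoc, ← mul_assoc _ (sc n ζ (n : ℂ)⁻¹), ← sc_comm, mul_assoc, hs]

lemma idem_smul_one [NeZero n] : idem n ζ k • toP h k 1 = toP h k 1 := by
  have hu : (sc n ζ (wt ζ k)⁻¹ * g n ζ) • toP h k 1 = toP h k 1 := by
    rw [mul_smul, g_smul, sc_smul, map_one, mul_one, ← map_mul, inv_mul_cancel₀ (wt_ne_zero h k),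
      map_one]
  have ht (t : ℕ) : (sc n ζ (wt ζ k)⁻¹ * g n ζ) ^ t • toP h k 1 = toP h k 1 := by
    induction t with
    | zero => rw [pow_zero, one_smul]
    | succ t ih => rw [pow_succ, mul_smul, hu, ih]
  rw [idem, mul_smul, Finset.sum_smul, Finset.sum_congr rfl fun t _ => ht t, Finset.sum_const,
    Finset.card_range, ← Nat.cast_smul_eq_nsmul (SkewA n ζ), ← mul_smul]
  have : sc n ζ (n : ℂ)⁻¹ * (n : SkewA n ζ) = 1 := by
    rw [← map_natCast (sc n ζ) n, ← map_mul, inv_mul_cancel₀ (NeZero.ne _), map_one]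
  rw [this, one_smul]

/-- `P_k` is the direct summand `A e_k` of `A`. -/
instance projective_P [NeZero n] : Module.Projective (SkewA n ζ) (P h k) :=
  Module.Projective.of_split (ofWt h k (idem n ζ k) (g_mul_idem h k))
    (LinearMap.toSpanSingleton (SkewA n ζ) (P h k) (toP h k 1)) <| hom_ext <| by
      rw [LinearMap.comp_apply, ofWt_one, LinearMap.toSpanSingleton_apply, idem_smul_one]; rfl

/-! ### The simple modules `S_k` -/

/-- The generator of the cyclic module `S_k`. -/
def gen (n : ℕ) (ζ : ℂ) (k : ZMod n) : SkewS n ζ k := Submodule.Quotient.mk 1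

lemma smul_gen (a : SkewA n ζ) : a • gen n ζ k = Submodule.Quotient.mk a := by
  rw [gen, ← Submodule.Quotient.mk_smul, smul_eq_mul, mul_one]

lemma x_smul_gen : x n ζ • gen n ζ k = 0 := by
  rw [smul_gen, Submodule.Quotient.mk_eq_zero]
  exact Ideal.subset_span (by simp [x])

lemma y_smul_gen : y n ζ • gen n ζ k = 0 := by
  rw [smul_gen, Submodule.Quotient.mk_eq_zero]
  exact Ideal.subset_span (by simp [y])

lemma g_smul_gen : g n ζ • gen n ζ k = sc n ζ (wt ζ k) • gen n ζ k := by
  rw [smul_gen, smul_gen, Submodule.Quotient.eq]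
  exact Ideal.subset_span (by simp [g, wt])

/-- The character of `A` on `S_k`. -/
def chi (h : IsPrimitiveRoot ζ n) (k : ZMod n) : SkewA n ζ →ₐ[ℂ] ℂ :=
  lift 0 0 (wt ζ k) rfl (wt_pow h k) (by simp) (by simp)

lemma smul_gen_eq (a : SkewA n ζ) : a • gen n ζ k = sc n ζ (chi h k a) • gen n ζ k := by
  induction a using induction with
  | hc c => rw [AlgHom.commutes]; rfl
  | hx => rw [chi, lift_x, map_zero, zero_smul, x_smul_gen]
  | hy => rw [chi, lift_y, map_zero, zero_smul, y_smul_gen]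
  | hg => rw [chi, lift_g, g_smul_gen]
  | hadd a b ha hb => rw [add_smul, ha, hb, map_add, map_add, add_smul]
  | hmul a b ha hb =>
    rw [mul_smul, hb, ← mul_smul, ← sc_comm, mul_smul, ha, ← mul_smul, ← map_mul, mul_comm,
      ← map_mul]

lemma exists_gen (s : SkewS n ζ k) : ∃ a : SkewA n ζ, s = a • gen n ζ k := by
  obtain ⟨a, rfl⟩ := Submodule.Quotient.mk_surjective _ s
  exact ⟨a, (smul_gen k a).symm⟩

/-- Every `a ∈ A` acts on `S_k` as the scalar `chi h k a`. -/
lemma smul_S (a : SkewA n ζ) (s : SkewS n ζ k) : a • s = sc n ζ (chi h k a) • s := by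
  obtain ⟨b, rfl⟩ := exists_gen k s
  rw [smul_gen_eq h k b, ← mul_smul, ← sc_comm, mul_smul, smul_gen_eq h, ← mul_smul, ← mul_smul,
    sc_comm]

lemma chi_x : chi h k (x n ζ) = 0 := lift_x ..
lemma chi_y : chi h k (y n ζ) = 0 := lift_y ..
lemma chi_g : chi h k (g n ζ) = wt ζ k := lift_g ..

lemma exists_sc_gen (h : IsPrimitiveRoot ζ n) (s : SkewS n ζ k) :
    ∃ c : ℂ, s = sc n ζ c • gen n ζ k := by
  obtain ⟨a, rfl⟩ := exists_gen k s
  exact ⟨_, smul_gen_eq h k a⟩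

/-- `S_k` is nonzero: the left ideal defining it is killed by the character `chi h k`. -/
lemma gen_ne_zero (h : IsPrimitiveRoot ζ n) : gen n ζ k ≠ 0 := by
  rw [gen, Ne, Submodule.Quotient.mk_eq_zero]
  intro h1
  have hle : Ideal.span {x n ζ, y n ζ, g n ζ - sc n ζ (wt ζ k)} ≤
      RingHom.ker (chi h k) := by
    rw [Ideal.span_le]
    rintro a (rfl | rfl | rfl)
    · exact chi_x h k
    · exact chi_y h k
    · change chi h k _ = 0
      rw [map_sub, chi_g, AlgHom.commutes]; exact sub_self _
  have := hle h1
  rw [RingHom.mem_ker, map_one] at this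
  exact one_ne_zero this

lemma sc_gen_eq_zero (h : IsPrimitiveRoot ζ n) {c : ℂ} (hc : sc n ζ c • gen n ζ k = 0) :
    c = 0 := by
  by_contra hne
  apply gen_ne_zero k h
  rw [← one_smul (SkewA n ζ) (gen n ζ k), ← map_one (sc n ζ), ← inv_mul_cancel₀ hne, map_mul,
    mul_smul, hc, smul_zero]

lemma chi_phi (p : Pol) : chi h k (phi n ζ p) = constantCoeff p := by
  induction p using MvPolynomial.induction_on with
  | C c => rw [phi_C, AlgHom.commutes, constantCoeff_C]; rfl
  | add p q hp hq => rw [map_add, map_add, map_add, hp, hq]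
  | mul_X p k hp =>
    rw [map_mul, map_mul, map_mul, constantCoeff_X, mul_zero]
    fin_cases k
    · simp [phi_X0, chi_x]
    · simp [phi_X1, chi_y]

/-- The augmentation `P_k → S_k`. -/
def eps : P h k →ₗ[SkewA n ζ] SkewS n ζ k := ofWt h k (gen n ζ k) (g_smul_gen k)

lemma eps_toP (p : Pol) : eps h k (toP h k p) = sc n ζ (constantCoeff p) • gen n ζ k := by
  rw [eps, ofWt_toP, smul_gen_eq h, chi_phi]

lemma eps_surjective : Function.Surjective (eps h k) := fun s => by
  obtain ⟨c, rfl⟩ := exists_sc_gen k h s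
  exact ⟨toP h k (C c), by rw [eps_toP, constantCoeff_C]⟩

/-! ### Exactness of the Koszul sequence -/

lemma phi_smul (p q : Pol) : phi n ζ p • toP h k q = toP h k (p * q) := by
  rw [← phi_smul_one, ← mul_smul, ← map_mul, phi_smul_one]

lemma toP_eq_zero {p : Pol} : toP h k p = 0 ↔ p = 0 := Iff.rfl

section koszul
variable [NeZero n]

/-- Multiplication by `X`, as a map `P_{k+1} → P_k`. -/
def mulX : P h (k + 1) →ₗ[SkewA n ζ] P h k :=
  ofWt h (k + 1) (toP h k (X 0)) (by
    rw [g_smul, sc_smul, sigma_X0, ← mul_assoc, ← map_mul, wt_add_one h])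

/-- Multiplication by `Y`, as a map `P_{k-1} → P_k`. -/
def mulY : P h (k - 1) →ₗ[SkewA n ζ] P h k :=
  ofWt h (k - 1) (toP h k (X 1)) (by
    rw [g_smul, sc_smul, sigma_X1, ← mul_assoc, ← map_mul, wt_sub_one h])

/-- Multiplication by `Y`, as a map `P_k → P_{k+1}`. -/
def mulY' : P h k →ₗ[SkewA n ζ] P h (k + 1) :=
  ofWt h k (toP h (k + 1) (X 1)) (by
    rw [g_smul, sc_smul, sigma_X1, ← mul_assoc, ← map_mul, ← wt_sub_one h, add_sub_cancel_right])

/-- Multiplication by `X`, as a map `P_k → P_{k-1}`. -/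
def mulX' : P h k →ₗ[SkewA n ζ] P h (k - 1) :=
  ofWt h k (toP h (k - 1) (X 0)) (by
    rw [g_smul, sc_smul, sigma_X0, ← mul_assoc, ← map_mul, ← wt_add_one h, sub_add_cancel])

lemma mulX_toP (p : Pol) : mulX h k (toP h (k + 1) p) = toP h k (X 0 * p) := by
  rw [mulX, ofWt_toP, phi_smul, mul_comm]

lemma mulY_toP (p : Pol) : mulY h k (toP h (k - 1) p) = toP h k (X 1 * p) := by
  rw [mulY, ofWt_toP, phi_smul, mul_comm]

lemma mulY'_toP (p : Pol) : mulY' h k (toP h k p) = toP h (k + 1) (X 1 * p) := by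
  rw [mulY', ofWt_toP, phi_smul, mul_comm]

lemma mulX'_toP (p : Pol) : mulX' h k (toP h k p) = toP h (k - 1) (X 0 * p) := by
  rw [mulX', ofWt_toP, phi_smul, mul_comm]

/-- The Koszul differential `P_{k+1} ⊕ P_{k-1} → P_k`, `(p, q) ↦ Xp + Yq`. -/
def d₁ : (P h (k + 1) × P h (k - 1)) →ₗ[SkewA n ζ] P h k := (mulX h k).coprod (mulY h k)

/-- The Koszul differential `P_k → P_{k+1} ⊕ P_{k-1}`, `r ↦ (Yr, -Xr)`. -/
def d₂ : P h k →ₗ[SkewA n ζ] (P h (k + 1) × P h (k - 1)) := (mulY' h k).prod (-mulX' h k)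

lemma d₁_toP (p q : Pol) :
    d₁ h k (toP h (k + 1) p, toP h (k - 1) q) = toP h k (X 0 * p + X 1 * q) := by
  rw [d₁, LinearMap.coprod_apply, mulX_toP, mulY_toP]; rfl

lemma d₂_toP (r : Pol) :
    d₂ h k (toP h k r) = (toP h (k + 1) (X 1 * r), toP h (k - 1) (-(X 0 * r))) := by
  refine Prod.ext (mulY'_toP h k r) ?_
  change -mulX' h k (toP h k r) = _
  rw [mulX'_toP]; rfl

lemma d₂_injective : Function.Injective (d₂ h k) := by
  rw [injective_iff_map_eq_zero]
  intro r hr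
  obtain ⟨r, rfl⟩ := exists_toP h k r
  rw [d₂_toP, Prod.mk_eq_zero, toP_eq_zero] at hr
  rw [toP_eq_zero]
  exact (mul_eq_zero.1 hr.1).resolve_left (X_ne_zero 1)

lemma exact_d₂_d₁ : Function.Exact (d₂ h k) (d₁ h k) := by
  rintro ⟨p, q⟩
  obtain ⟨p, rfl⟩ := exists_toP _ _ p
  obtain ⟨q, rfl⟩ := exists_toP _ _ q
  rw [d₁_toP, toP_eq_zero]
  constructor
  · intro h0
    have hdvd : (X 1 : Pol) ∣ X 0 * p := ⟨-q, by linear_combination h0⟩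
    rw [X_dvd_mul_iff, X_dvd_X] at hdvd
    obtain ⟨r, rfl⟩ := hdvd.resolve_left (by simp)
    have hq : q = -(X 0 * r) := mul_left_cancel₀ (X_ne_zero (R := ℂ) (1 : Fin 2))
      (by linear_combination h0)
    exact ⟨toP h k r, by rw [d₂_toP, hq]⟩
  · rintro ⟨r, hr⟩
    obtain ⟨r, rfl⟩ := exists_toP _ _ r
    rw [d₂_toP, Prod.mk.injEq] at hr
    obtain ⟨hp, hq⟩ := hr
    replace hp : X 1 * r = p := hp
    replace hq : -(X 0 * r) = q := hq
    rw [← hp, ← hq]; ring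

/-- A polynomial without constant term lies in the ideal `(X, Y)`. -/
lemma exists_eq_of_constantCoeff {p : Pol} (hp : constantCoeff p = 0) :
    ∃ q r, p = X 0 * q + X 1 * r := by
  suffices H : ∀ p : Pol, ∃ q r, p = C (constantCoeff p) + (X 0 * q + X 1 * r) by
    obtain ⟨q, r, hqr⟩ := H p
    exact ⟨q, r, by rwa [hp, map_zero, zero_add] at hqr⟩
  intro p
  induction p using MvPolynomial.induction_on with
  | C c => exact ⟨0, 0, by simp⟩
  | add p p' hp hp' =>
    obtain ⟨q, r, hq⟩ := hp
    obtain ⟨q', r', hq'⟩ := hp'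
    exact ⟨q + q', r + r', by rw [map_add, map_add]; linear_combination hq + hq'⟩
  | mul_X p k _ =>
    fin_cases k
    · exact ⟨p, 0, by simp [mul_comm]⟩
    · exact ⟨0, p, by simp [mul_comm]⟩

lemma exact_d₁_eps : Function.Exact (d₁ h k) (eps h k) := by
  intro p
  obtain ⟨p, rfl⟩ := exists_toP _ _ p
  rw [eps_toP]
  constructor
  · intro h0
    obtain ⟨q, r, rfl⟩ := exists_eq_of_constantCoeff (sc_gen_eq_zero k h h0)
    exact ⟨(toP _ _ q, toP _ _ r), d₁_toP h k q r⟩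
  · rintro ⟨⟨q, r⟩, hp⟩
    obtain ⟨q, rfl⟩ := exists_toP _ _ q
    obtain ⟨r, rfl⟩ := exists_toP _ _ r
    rw [d₁_toP] at hp
    replace hp : X 0 * q + X 1 * r = p := hp
    rw [← hp]; simp

end koszul

/-! ### The Koszul resolution as a projective resolution -/

section resolution
variable [NeZero n]

/-- The terms of the Koszul resolution of `S_k`. -/
def resX : ℕ → ModuleCat.{0} (SkewA n ζ)
  | 0 => ModuleCat.of _ (P h k)
  | 1 => ModuleCat.of _ (P h (k + 1) × P h (k - 1))
  | 2 => ModuleCat.of _ (P h k)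
  | _ + 3 => ModuleCat.of _ PUnit

/-- The differentials of the Koszul resolution of `S_k`. -/
def resd : ∀ m, resX h k (m + 1) ⟶ resX h k m
  | 0 => ModuleCat.ofHom (d₁ h k)
  | 1 => ModuleCat.ofHom (d₂ h k)
  | _ + 2 => 0

lemma resd_comp : ∀ m, resd h k (m + 1) ≫ resd h k m = 0
  | 0 => by
    change ModuleCat.ofHom (d₂ h k) ≫ ModuleCat.ofHom (d₁ h k) = 0
    rw [← ModuleCat.ofHom_comp, (exact_d₂_d₁ h k).linearMap_comp_eq_zero]; rfl
  | _ + 1 => Limits.zero_comp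

/-- The Koszul complex `0 → P_k → P_{k+1} ⊕ P_{k-1} → P_k`. -/
def koszul : ChainComplex (ModuleCat.{0} (SkewA n ζ)) ℕ :=
  ChainComplex.of (resX h k) (resd h k) (resd_comp h k)

lemma koszul_d (m : ℕ) : (koszul h k).d (m + 1) m = resd h k m := ChainComplex.of_d ..

lemma resd_exact (m : ℕ) :
    (ShortComplex.mk (resd h k (m + 1)) (resd h k m) (resd_comp h k m)).Exact := by
  rw [ShortComplex.ShortExact.moduleCat_exact_iff_function_exact]
  match m with
  | 0 => exact exact_d₂_d₁ h k
  | 1 =>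
    intro (r : P h k)
    change d₂ h k r = 0 ↔ r ∈ Set.range fun _ => 0
    rw [map_eq_zero_iff _ (d₂_injective h k)]
    constructor
    · rintro rfl; exact ⟨0, rfl⟩
    · rintro ⟨_, hr⟩; exact hr.symm
  | m + 2 => intro (r : PUnit); exact ⟨fun _ => ⟨0, rfl⟩, fun _ => rfl⟩

lemma projective_resX : ∀ m, Projective (resX h k m)
  | 0 => (IsProjective.iff_projective (R := SkewA n ζ) (P h k)).1 inferInstance
  | 1 => (IsProjective.iff_projective (R := SkewA n ζ) (P h (k + 1) × P h (k - 1))).1 inferInstance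
  | 2 => (IsProjective.iff_projective (R := SkewA n ζ) (P h k)).1 inferInstance
  | _ + 3 => (IsProjective.iff_projective (R := SkewA n ζ) PUnit).1 inferInstance

/-- The object `S_k` of the category of `A`-modules. -/
abbrev Sm (n : ℕ) (ζ : ℂ) (k : ZMod n) : ModuleCat.{0} (SkewA n ζ) :=
  ModuleCat.of (SkewA n ζ) (SkewS n ζ k)

/-- The augmentation, as a morphism of modules. -/
def epsHom : (koszul h k).X 0 ⟶ Sm n ζ k := ModuleCat.ofHom (eps h k)

lemma d_epsHom : (koszul h k).d 1 0 ≫ epsHom h k = 0 := by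
  rw [koszul_d]
  change ModuleCat.ofHom (d₁ h k) ≫ ModuleCat.ofHom (eps h k) = 0
  rw [← ModuleCat.ofHom_comp, (exact_d₁_eps h k).linearMap_comp_eq_zero]; rfl

/-- The Koszul resolution of `S_k`. -/
def resolution : ProjectiveResolution (Sm n ζ k) where
  complex := koszul h k
  projective := projective_resX h k
  π := (ChainComplex.toSingle₀Equiv _ _).symm ⟨epsHom h k, d_epsHom h k⟩
  quasiIso := ⟨fun m => by
    cases m with
    | zero =>
      rw [ChainComplex.quasiIsoAt₀_iff, ShortComplex.quasiIso_iff_of_zeros' _ rfl rfl rfl]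
      refine (ShortComplex.exact_and_epi_g_iff_of_iso
        (S₂ := ShortComplex.mk ((koszul h k).d 1 0) (epsHom h k) (d_epsHom h k)) ?_).2 ⟨?_, ?_⟩
      · exact ShortComplex.isoMk (Iso.refl _) (Iso.refl _) (Iso.refl _)
          ((Category.id_comp _).trans (Category.comp_id _).symm)
          ((Category.id_comp _).trans (Eq.trans
            (ChainComplex.toSingle₀Equiv_symm_apply_f_zero (epsHom h k) (d_epsHom h k)).symm
            (Category.comp_id _).symm))
      · rw [ShortComplex.ShortExact.moduleCat_exact_iff_function_exact]
        simp only [koszul_d]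
        exact exact_d₁_eps h k
      · exact (ModuleCat.epi_iff_surjective _).2 (eps_surjective h k)
    | succ m =>
      rw [quasiIsoAt_iff_exactAt' (hL := ChainComplex.exactAt_succ_single_obj ..),
          HomologicalComplex.exactAt_iff' _ (m + 2) (m + 1) m (by simp) (by simp)]
      refine (ShortComplex.exact_iff_of_iso (S₂ := ShortComplex.mk _ _ (resd_comp h k m)) ?_).2
        (resd_exact h k m)
      exact ShortComplex.isoMk (Iso.refl _) (Iso.refl _) (Iso.refl _)
        ((Category.id_comp _).trans ((koszul_d h k (m + 1)).symm.trans (Category.comp_id _).symm))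
        ((Category.id_comp _).trans ((koszul_d h k m).symm.trans (Category.comp_id _).symm))⟩

end resolution

/-! ### Maps into `S_j` and the dimension of `Ext` -/

section hom

variable {h k}

/-- Maps `P_k → S_j` vanish for `j ≠ k`, since `g` acts with different weights on the generator of
`P_k` and on `S_j`. -/
lemma hom_eq_zero [NeZero n] {j : ZMod n} (hjk : j ≠ k) (f : P h k →ₗ[SkewA n ζ] SkewS n ζ j) :
    f = 0 := by
  refine hom_ext ?_
  have h1 := g_smul_hom_one f
  rw [LinearMap.zero_apply]
  obtain ⟨c, hc⟩ := exists_sc_gen j h (f (toP h k 1))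
  rw [smul_S h j, chi_g, hc, ← sub_eq_zero, ← mul_smul, ← mul_smul, ← sub_smul, ← map_mul,
    ← map_mul, ← map_sub, ← sub_mul] at h1
  have h2 := sc_gen_eq_zero j h h1
  rw [mul_eq_zero, sub_eq_zero] at h2
  rw [hc, h2.resolve_left fun e => hjk (wt_injective h e), map_zero, zero_smul]

/-- Maps `P_k → S_k` are scalar multiples of the augmentation. -/
lemma exists_hom_eq (f : P h k →ₗ[SkewA n ζ] SkewS n ζ k) :
    ∃ c : ℂ, ∀ p, f p = sc n ζ c • eps h k p := by
  obtain ⟨c, hc⟩ := exists_sc_gen k h (f (toP h k 1))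
  refine ⟨c, fun p => ?_⟩
  obtain ⟨p, rfl⟩ := exists_toP _ _ p
  rw [← phi_smul_one, map_smul, map_smul, hc, eps, ofWt_one, ← mul_smul, ← mul_smul, sc_comm]

lemma eps_ne_zero : eps h k ≠ 0 := fun e => gen_ne_zero k h <| by
  rw [← ofWt_one h k (gen n ζ k) (g_smul_gen k)]
  exact LinearMap.congr_fun e _

end hom

lemma rank_one_of {M N : ModuleCat.{0} (SkewA n ζ)} (f : M ⟶ N) (hf : f ≠ 0)
    (H : ∀ f' : M ⟶ N, ∃ c : ℂ, ∀ p, f'.hom p = sc n ζ c • f.hom p) :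
    Module.rank ℂ (M ⟶ N) = 1 := by
  rw [rank_eq_one_iff]
  refine ⟨f, hf, fun f' => ?_⟩
  obtain ⟨c, hc⟩ := H f'
  exact ⟨c, ModuleCat.hom_ext (LinearMap.ext fun p => (hc p).symm)⟩

lemma rank_zero_of {M N : ModuleCat.{0} (SkewA n ζ)} (H : ∀ f : M ⟶ N, f = 0) :
    Module.rank ℂ (M ⟶ N) = 0 := rank_zero_iff_forall_zero.2 H

lemma prod_apply {j k' : ZMod n} (f : (P h k × P h k') →ₗ[SkewA n ζ] SkewS n ζ j) (p : P h k × P h k') :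
    f p = (f ∘ₗ LinearMap.inl _ _ _) p.1 + (f ∘ₗ LinearMap.inr _ _ _) p.2 := by
  simp [← map_add]

lemma rank_P_self : Module.rank ℂ (ModuleCat.of (SkewA n ζ) (P h k) ⟶ Sm n ζ k) = 1 :=
  rank_one_of (ModuleCat.ofHom (eps h k)) (fun e => eps_ne_zero (congrArg ModuleCat.Hom.hom e))
    fun f => exists_hom_eq f.hom

section ext
variable [NeZero n] (j : ZMod n)

/-- The differentials of the Koszul resolution vanish after applying `Hom(-, S_j)`, since their
matrix entries are multiples of `X` and `Y`, which kill `S_j`. -/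
lemma resd_comp_eq_zero : ∀ (m : ℕ) (f : resX h k m ⟶ Sm n ζ j), resd h k m ≫ f = 0
  | 0, f => by
    let f' : P h k →ₗ[SkewA n ζ] SkewS n ζ j := f.hom
    refine ModuleCat.hom_ext (LinearMap.ext fun (p : P h (k + 1) × P h (k - 1)) => ?_)
    change f' (d₁ h k p) = 0
    obtain ⟨p, q⟩ := p
    obtain ⟨p, rfl⟩ := exists_toP _ _ p
    obtain ⟨q, rfl⟩ := exists_toP _ _ q
    rw [d₁_toP, toP_add, ← x_smul, ← y_smul, map_add, map_smul, map_smul, smul_S h j (x n ζ),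
      smul_S h j (y n ζ), chi_x, chi_y, map_zero, zero_smul, zero_smul, add_zero]
  | 1, f => by
    let f' : (P h (k + 1) × P h (k - 1)) →ₗ[SkewA n ζ] SkewS n ζ j := f.hom
    refine ModuleCat.hom_ext (LinearMap.ext fun (r : P h k) => ?_)
    change f' (d₂ h k r) = 0
    obtain ⟨r, rfl⟩ := exists_toP _ _ r
    have hr : d₂ h k (toP h k r) =
        y n ζ • (toP h (k + 1) r, 0) - x n ζ • (0, toP h (k - 1) r) := by
      rw [d₂_toP, Prod.smul_mk, Prod.smul_mk, smul_zero, smul_zero, x_smul, y_smul, Prod.mk_sub_mk,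
        sub_zero, zero_sub]
      rfl
    rw [hr, map_sub, map_smul, map_smul, smul_S h j (x n ζ),
      smul_S h j (y n ζ), chi_x, chi_y, map_zero, zero_smul, zero_smul, sub_zero]
  | _ + 2, _ => Limits.zero_comp

lemma yoneda_d (a b : ℕ) : ((koszul h k).linearYonedaObj ℂ (Sm n ζ j)).d a b = 0 := by
  by_cases hab : a + 1 = b
  · subst hab
    refine ModuleCat.hom_ext (LinearMap.ext fun (f : resX h k a ⟶ Sm n ζ j) => ?_)
    change (koszul h k).d (a + 1) a ≫ f = 0
    rw [koszul_d]
    exact resd_comp_eq_zero h k j a f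
  · exact HomologicalComplex.shape _ _ _ hab

/-- `Ext^m(S_k, S_j)` is the space of maps from the `m`-th term of the Koszul resolution to
`S_j`. -/
lemma rank_ext (m : ℕ) :
    Module.rank ℂ (((Ext ℂ (ModuleCat.{0} (SkewA n ζ)) m).obj
      (Opposite.op (Sm n ζ k))).obj (Sm n ζ j)) =
    Module.rank ℂ (resX h k m ⟶ Sm n ζ j) := by
  let K := (koszul h k).linearYonedaObj ℂ (Sm n ζ j)
  let e₁ : ((Ext ℂ (ModuleCat.{0} (SkewA n ζ)) m).obj
      (Opposite.op (Sm n ζ k))).obj (Sm n ζ j) ≅ K.homology m := (resolution h k).isoExt m _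
  let e₂ : K.homology m ≅ K.X m := (ShortComplex.HomologyData.ofZeros (K.sc m)
    (yoneda_d h k j _ _) (yoneda_d h k j _ _)).left.homologyIso
  exact (e₁ ≪≫ e₂).toLinearEquiv.rank_eq

lemma rank_P_ne {j : ZMod n} (hj : j ≠ k) :
    Module.rank ℂ (ModuleCat.of (SkewA n ζ) (P h k) ⟶ Sm n ζ j) = 0 :=
  rank_zero_of fun f => ModuleCat.hom_ext (hom_eq_zero hj f.hom)

variable {j} {k' : ZMod n}

lemma rank_prod_left (hk : k ≠ k') :
    Module.rank ℂ (ModuleCat.of (SkewA n ζ) (P h k × P h k') ⟶ Sm n ζ k) = 1 := by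
  refine rank_one_of (ModuleCat.ofHom (eps h k ∘ₗ LinearMap.fst _ _ _)) (fun e => ?_) fun f => ?_
  · refine eps_ne_zero (h := h) (k := k) (LinearMap.ext fun p => ?_)
    exact LinearMap.congr_fun (congrArg ModuleCat.Hom.hom e) (p, 0)
  · obtain ⟨c, hc⟩ := exists_hom_eq (f.hom ∘ₗ LinearMap.inl _ (P h k) (P h k'))
    refine ⟨c, fun p => (prod_apply h k f.hom p).trans ?_⟩
    rw [hc, hom_eq_zero hk (f.hom ∘ₗ LinearMap.inr _ (P h k) (P h k'))]
    exact add_zero _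

lemma rank_prod_right (hk : k' ≠ k) :
    Module.rank ℂ (ModuleCat.of (SkewA n ζ) (P h k × P h k') ⟶ Sm n ζ k') = 1 := by
  refine rank_one_of (ModuleCat.ofHom (eps h k' ∘ₗ LinearMap.snd _ _ _)) (fun e => ?_) fun f => ?_
  · refine eps_ne_zero (h := h) (k := k') (LinearMap.ext fun p => ?_)
    exact LinearMap.congr_fun (congrArg ModuleCat.Hom.hom e) (0, p)
  · obtain ⟨c, hc⟩ := exists_hom_eq (f.hom ∘ₗ LinearMap.inr _ (P h k) (P h k'))
    refine ⟨c, fun p => (prod_apply h k f.hom p).trans ?_⟩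
    rw [hc, hom_eq_zero hk (f.hom ∘ₗ LinearMap.inl _ (P h k) (P h k'))]
    exact zero_add _

lemma rank_prod_ne (hk : j ≠ k) (hk' : j ≠ k') :
    Module.rank ℂ (ModuleCat.of (SkewA n ζ) (P h k × P h k') ⟶ Sm n ζ j) = 0 := by
  refine rank_zero_of fun f => ModuleCat.hom_ext (LinearMap.ext fun p => ?_)
  refine (prod_apply h k f.hom p).trans ?_
  rw [hom_eq_zero hk (f.hom ∘ₗ LinearMap.inl _ (P h k) (P h k')),
    hom_eq_zero hk' (f.hom ∘ₗ LinearMap.inr _ (P h k) (P h k'))]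
  exact add_zero _

end ext

/-- The two arrows of the McKay quiver leaving a vertex have distinct targets, as `n ≥ 3`. -/
lemma add_one_ne_sub_one (hn : 3 ≤ n) (k : ZMod n) : k + 1 ≠ k - 1 := by
  intro e
  have h2 : ((2 : ℕ) : ZMod n) = 0 := by
    push_cast
    linear_combination e
  rw [ZMod.natCast_eq_zero_iff] at h2
  have := Nat.le_of_dvd (by norm_num) h2
  omega

end SkewExt

theorem statement_19 (n : ℕ) (hn : 3 ≤ n) (ζ : ℂ) (hζ : IsPrimitiveRoot ζ n)
    (i j : ZMod n) (m : ℕ) :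
    (((m = 0 ∧ j = i) ∨ (m = 1 ∧ (j = i + 1 ∨ j = i - 1)) ∨ (m = 2 ∧ j = i)) →
      Module.rank ℂ
        (((Ext ℂ (ModuleCat.{0} (SkewA n ζ)) m).obj
            (Opposite.op (ModuleCat.of (SkewA n ζ) (SkewS n ζ i)))).obj
          (ModuleCat.of (SkewA n ζ) (SkewS n ζ j))) = 1) ∧
    (¬ ((m = 0 ∧ j = i) ∨ (m = 1 ∧ (j = i + 1 ∨ j = i - 1)) ∨ (m = 2 ∧ j = i)) →
      Module.rank ℂ
        (((Ext ℂ (ModuleCat.{0} (SkewA n ζ)) m).obj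
            (Opposite.op (ModuleCat.of (SkewA n ζ) (SkewS n ζ i)))).obj
          (ModuleCat.of (SkewA n ζ) (SkewS n ζ j))) = 0) := by
  have : NeZero n := ⟨by omega⟩
  have hne := SkewExt.add_one_ne_sub_one hn i
  have key := SkewExt.rank_ext hζ i j m
  rw [key]
  match m with
  | 0 =>
    refine ⟨fun H => ?_, fun H => ?_⟩
    · obtain rfl : j = i := by simpa using H
      exact SkewExt.rank_P_self hζ j
    · exact SkewExt.rank_P_ne hζ i (by simpa using H)
  | 1 =>
    refine ⟨fun H => ?_, fun H => ?_⟩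
    · obtain rfl | rfl : j = i + 1 ∨ j = i - 1 := by simpa using H
      · exact SkewExt.rank_prod_left hζ _ hne
      · exact SkewExt.rank_prod_right hζ _ hne.symm
    · obtain ⟨h₁, h₂⟩ : ¬ j = i + 1 ∧ ¬ j = i - 1 := by simpa using H
      exact SkewExt.rank_prod_ne hζ _ h₁ h₂
  | 2 =>
    refine ⟨fun H => ?_, fun H => ?_⟩
    · obtain rfl : j = i := by simpa using H
      exact SkewExt.rank_P_self hζ j
    · exact SkewExt.rank_P_ne hζ i (by simpa using H)
  | m + 3 =>
    refine ⟨fun H => by omega, fun _ => ?_⟩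
    refine SkewExt.rank_zero_of fun f => ModuleCat.hom_ext (LinearMap.ext fun p => ?_)
    rw [show p = 0 from Subsingleton.elim (α := PUnit) _ _, map_zero, map_zero]
end
end
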